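/- Let δ ∈ (0,1), p > 1. Let α : ℝ → [0,1] be smooth with α(t) = 1 for t ≤ −1 and α(t) = 0 for t ≥ 1. Let l ≥ 1, d = 3l, and define β₋(t) := α((t−d)/l), β₊(t) := 1 − α((t+d)/l), and D := β₋² + β₊². Let R ≥ d + l, and let u₋, u₊ : ℝ → ℂⁿ be measurable with ‖u₋‖_{0,p,δ,−} < ∞ and ‖u₊‖_{0,p,δ,+} < ∞. Then (∫_0^∞ e^{pδt} ‖((β₋β₊')/D)(t−R)·u₋(t−2R) + ((β₋β₋')/D)(t−R)·u₊(t)‖^p dt)^{1/p} ≤ (sup|α'|/l)·( e^{2δ(l−d)}·‖u₋‖_{0,p,δ,−} + ‖u₊‖_{0,p,δ,+} ). -/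

import Mathlib

open MeasureTheory Set
open scoped ENNReal

/-- The weighted `L^p` norm `‖f‖_{0,p,δ,+} = (∫_0^∞ e^{pδt} ‖f t‖^p dt)^{1/p}`
on the half-line `[0,∞)`. -/
noncomputable def wnormPlus (n : ℕ) (p δ : ℝ) (f : ℝ → (Fin n → ℂ)) : ℝ≥0∞ :=
  (∫⁻ t in Ioi (0:ℝ), ENNReal.ofReal (Real.exp (p * δ * t) * ‖f t‖ ^ p)) ^ (1 / p)

/-- The weighted `L^p` norm `‖f‖_{0,p,δ,−} = (∫_{−∞}^0 e^{−pδt} ‖f t‖^p dt)^{1/p}`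
on the half-line `(−∞,0]`. -/
noncomputable def wnormMinus (n : ℕ) (p δ : ℝ) (f : ℝ → (Fin n → ℂ)) : ℝ≥0∞ :=
  (∫⁻ t in Iio (0:ℝ), ENNReal.ofReal (Real.exp (-(p * δ * t)) * ‖f t‖ ^ p)) ^ (1 / p)

/-!
Since `α = 1` on `(-∞, -1]` and `α = 0` on `[1, ∞)`, at every point one of `β₋`, `β₊` equals `1`
as soon as `l ≤ d`. Hence `|β₋| ≤ D`, and both coefficients of `E₊` are bounded by `sup |α'| / l`.
The summand in `u₊` then needs no further argument. The coefficient of `u₋` vanishes for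
`t > T := R + l - d`, and `t ≤ T` gives `e^{δt} ≤ e^{2δT} e^{-δt}`: this exchanges the weight
`e^{δt}` for `e^{-δt}`, and translation by `2R` contributes `e^{-2δR}`, altogether
`e^{2δT - 2δR} = e^{2δ(l - d)}`.
-/

section ExpWeightedNorm

variable {E : Type*} [NormedAddCommGroup E] [NormedSpace ℝ E]

/-- The exponentially weighted `L^p` norm `‖e^{δt} f‖_{L^p(s)}` of a function on the line. The norms
`‖·‖_{0,p,δ,+}` and `‖·‖_{0,p,δ,−}` are those with weights `δ` on `(0, ∞)` and `-δ` on `(-∞, 0)`. -/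
noncomputable def expWeightedNorm (δ : ℝ) (p : ℝ≥0∞) (s : Set ℝ) (f : ℝ → E) : ℝ≥0∞ :=
  eLpNorm (fun t => Real.exp (δ * t) • f t) p (volume.restrict s)

lemma expWeightedNorm_ofReal (δ : ℝ) {p : ℝ} (hp : 0 < p) (s : Set ℝ) (f : ℝ → E) :
    expWeightedNorm δ (ENNReal.ofReal p) s f =
      (∫⁻ t in s, ENNReal.ofReal (Real.exp (p * (δ * t)) * ‖f t‖ ^ p)) ^ (1 / p) := by
  have henorm (t : ℝ) : ‖Real.exp (δ * t) • f t‖ₑ ^ p =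
      ENNReal.ofReal (Real.exp (p * (δ * t)) * ‖f t‖ ^ p) := by
    rw [← ofReal_norm, ENNReal.ofReal_rpow_of_nonneg (norm_nonneg _) hp.le, norm_smul,
      Real.norm_of_nonneg (Real.exp_pos _).le, Real.mul_rpow (Real.exp_pos _).le (norm_nonneg _),
      ← Real.exp_mul, mul_comm p]
  rw [expWeightedNorm, eLpNorm_eq_lintegral_rpow_enorm_toReal
    (ENNReal.ofReal_pos.2 hp).ne' ENNReal.ofReal_ne_top, ENNReal.toReal_ofReal hp.le]
  simp only [henorm]

lemma wnormPlus_eq_expWeightedNorm (n : ℕ) {p : ℝ} (hp : 0 < p) (δ : ℝ) (f : ℝ → Fin n → ℂ) :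
    wnormPlus n p δ f = expWeightedNorm δ (ENNReal.ofReal p) (Ioi 0) f := by
  simp only [wnormPlus, expWeightedNorm_ofReal δ hp, mul_assoc]

lemma wnormMinus_eq_expWeightedNorm (n : ℕ) {p : ℝ} (hp : 0 < p) (δ : ℝ) (f : ℝ → Fin n → ℂ) :
    wnormMinus n p δ f = expWeightedNorm (-δ) (ENNReal.ofReal p) (Iio 0) f := by
  simp only [wnormMinus, expWeightedNorm_ofReal (-δ) hp, mul_assoc, neg_mul, mul_neg]

lemma expWeightedNorm_add_le {p : ℝ≥0∞} (hp : 1 ≤ p) (δ : ℝ) {s : Set ℝ} {f g : ℝ → E}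
    (hf : AEStronglyMeasurable f (volume.restrict s))
    (hg : AEStronglyMeasurable g (volume.restrict s)) :
    expWeightedNorm δ p s (fun t => f t + g t) ≤
      expWeightedNorm δ p s f + expWeightedNorm δ p s g := by
  simp only [expWeightedNorm, smul_add]
  exact eLpNorm_add_le (by fun_prop) (by fun_prop) hp

lemma expWeightedNorm_mono_set (δ : ℝ) (p : ℝ≥0∞) {s t : Set ℝ} (hst : s ⊆ t) (f : ℝ → E) :
    expWeightedNorm δ p s f ≤ expWeightedNorm δ p t f :=
  eLpNorm_mono_measure _ (Measure.restrict_mono_set _ hst)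

lemma expWeightedNorm_eq_univ_of_support_subset (δ : ℝ) (p : ℝ≥0∞) {s : Set ℝ} {f : ℝ → E}
    (hf : Function.support f ⊆ s) :
    expWeightedNorm δ p s f = expWeightedNorm δ p univ f := by
  rw [expWeightedNorm, expWeightedNorm, Measure.restrict_univ]
  exact eLpNorm_restrict_eq_of_support_subset ((Function.support_smul_subset_right _ f).trans hf)

lemma expWeightedNorm_le_mul_of_forall_mem {δ δ' : ℝ} {s : Set ℝ} (hs : MeasurableSet s)
    {f g : ℝ → E} {c : ℝ}
    (h : ∀ t ∈ s, Real.exp (δ * t) * ‖f t‖ ≤ c * (Real.exp (δ' * t) * ‖g t‖)) (p : ℝ≥0∞) :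
    expWeightedNorm δ p s f ≤ ENNReal.ofReal c * expWeightedNorm δ' p s g := by
  refine eLpNorm_le_mul_eLpNorm_of_ae_le_mul (ae_restrict_of_forall_mem hs fun t ht => ?_) p
  simpa only [norm_smul, Real.norm_of_nonneg (Real.exp_pos _).le] using h t ht

lemma expWeightedNorm_smul_le (δ : ℝ) (p : ℝ≥0∞) {s : Set ℝ} (hs : MeasurableSet s)
    {a : ℝ → ℝ} {K : ℝ} (ha : ∀ t ∈ s, |a t| ≤ K) (f : ℝ → E) :
    expWeightedNorm δ p s (fun t => a t • f t) ≤ ENNReal.ofReal K * expWeightedNorm δ p s f := by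
  refine expWeightedNorm_le_mul_of_forall_mem hs (fun t ht => ?_) p
  calc Real.exp (δ * t) * ‖a t • f t‖ = |a t| * (Real.exp (δ * t) * ‖f t‖) := by
        rw [norm_smul, Real.norm_eq_abs, mul_left_comm]
    _ ≤ K * (Real.exp (δ * t) * ‖f t‖) := by gcongr; exact ha t ht

lemma expWeightedNorm_Iic_le_neg {δ : ℝ} (hδ : 0 ≤ δ) (p : ℝ≥0∞) (T : ℝ) (f : ℝ → E) :
    expWeightedNorm δ p (Iic T) f ≤
      ENNReal.ofReal (Real.exp (2 * δ * T)) * expWeightedNorm (-δ) p (Iic T) f := by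
  refine expWeightedNorm_le_mul_of_forall_mem measurableSet_Iic (fun t (ht : t ≤ T) => ?_) p
  have hexp : Real.exp (δ * t) ≤ Real.exp (2 * δ * T) * Real.exp (-δ * t) := by
    rw [← Real.exp_add, Real.exp_le_exp]
    linarith [mul_le_mul_of_nonneg_left ht hδ]
  rw [← mul_assoc]
  gcongr

lemma expWeightedNorm_comp_sub_right (δ : ℝ) (p : ℝ≥0∞) {s : Set ℝ} (hs : MeasurableSet s)
    {f : ℝ → E} (hf : AEStronglyMeasurable f (volume.restrict s)) (h : ℝ) :
    expWeightedNorm δ p ((· - h) ⁻¹' s) (fun t => f (t - h)) =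
      ENNReal.ofReal (Real.exp (δ * h)) * expWeightedNorm δ p s f := by
  have hmeas : AEStronglyMeasurable (fun t => Real.exp (δ * t) • f t) (volume.restrict s) := by
    fun_prop
  have hmp : MeasurePreserving (· - h) (volume.restrict ((· - h) ⁻¹' s)) (volume.restrict s) :=
    (measurePreserving_sub_right volume h).restrict_preimage hs
  have hfactor : (fun t => Real.exp (δ * t) • f (t - h)) =
      Real.exp (δ * h) • ((fun t => Real.exp (δ * t) • f t) ∘ (· - h)) := by
    ext t
    rw [Pi.smul_apply, Function.comp_apply, smul_smul, ← Real.exp_add]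
    ring_nf
  rw [expWeightedNorm, hfactor, eLpNorm_const_smul, eLpNorm_comp_measurePreserving hmeas hmp,
    Real.enorm_of_nonneg (Real.exp_pos _).le]
  rfl

lemma expWeightedNorm_smul_comp_sub_right_le {δ : ℝ} (hδ : 0 ≤ δ) (p : ℝ≥0∞) (s : Set ℝ)
    {a : ℝ → ℝ} {K T h : ℝ} (ha : ∀ t, |a t| ≤ K) (haT : ∀ t, T < t → a t = 0) (hTh : T < h)
    {f : ℝ → E} (hf : AEStronglyMeasurable f (volume.restrict (Iio 0))) :
    expWeightedNorm δ p s (fun t => a t • f (t - h)) ≤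
      ENNReal.ofReal K *
        (ENNReal.ofReal (Real.exp (δ * (2 * T - h))) * expWeightedNorm (-δ) p (Iio 0) f) := by
  have hsupp : Function.support (fun t => a t • f (t - h)) ⊆ Iic T :=
    Function.support_subset_iff'.2 fun t ht => by rw [haT t (not_le.1 ht), zero_smul]
  have hpre : Iic T ⊆ (· - h) ⁻¹' Iio 0 := fun t (ht : t ≤ T) =>
    sub_neg.2 (ht.trans_lt hTh)
  calc expWeightedNorm δ p s (fun t => a t • f (t - h))
      ≤ expWeightedNorm δ p (Iic T) (fun t => a t • f (t - h)) :=
        (expWeightedNorm_mono_set δ p (subset_univ s) _).trans_eq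
          (expWeightedNorm_eq_univ_of_support_subset δ p hsupp).symm
    _ ≤ ENNReal.ofReal K * expWeightedNorm δ p (Iic T) (fun t => f (t - h)) :=
        expWeightedNorm_smul_le δ p measurableSet_Iic (fun t _ => ha t) _
    _ ≤ ENNReal.ofReal K * (ENNReal.ofReal (Real.exp (2 * δ * T)) *
          expWeightedNorm (-δ) p ((· - h) ⁻¹' Iio 0) (fun t => f (t - h))) := by
        gcongr
        exact (expWeightedNorm_Iic_le_neg hδ p T _).trans
          (mul_le_mul_right (expWeightedNorm_mono_set (-δ) p hpre _) _)
    _ = ENNReal.ofReal K *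
          (ENNReal.ofReal (Real.exp (δ * (2 * T - h))) * expWeightedNorm (-δ) p (Iio 0) f) := by
        rw [expWeightedNorm_comp_sub_right (-δ) p measurableSet_Iio hf, ← mul_assoc (ENNReal.ofReal
          (Real.exp _)), ← ENNReal.ofReal_mul (Real.exp_pos _).le, ← Real.exp_add]
        ring_nf

end ExpWeightedNorm

section Deriv

variable {F : Type*} [NormedAddCommGroup F] [NormedSpace ℝ F]

lemma deriv_eq_zero_of_mem_nhds_of_forall_eq {f : ℝ → F} {c : F} {s : Set ℝ} {t : ℝ}
    (hs : s ∈ nhds t) (hf : ∀ x ∈ s, f x = c) : deriv f t = 0 :=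
  (Filter.EventuallyEq.deriv_eq (Filter.eventually_of_mem hs hf)).trans (deriv_const t c)

lemma bddAbove_range_norm_deriv_of_eventuallyEq_const {f : ℝ → F} (hf : ContDiff ℝ 1 f)
    {c₁ c₂ : F} (hbot : ∀ᶠ t in Filter.atBot, f t = c₁) (htop : ∀ᶠ t in Filter.atTop, f t = c₂) :
    BddAbove (range fun t => ‖deriv f t‖) := by
  obtain ⟨a, ha⟩ := Filter.eventually_atBot.1 hbot
  obtain ⟨b, hb⟩ := Filter.eventually_atTop.1 htop
  have hsupp : HasCompactSupport (deriv f) := by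
    refine .intro (isCompact_Icc (a := a) (b := b)) fun t ht => ?_
    rcases lt_or_ge t a with hta | hat
    · exact deriv_eq_zero_of_mem_nhds_of_forall_eq (Iic_mem_nhds hta) ha
    · have hbt : b < t := not_le.1 fun htb => ht ⟨hat, htb⟩
      exact deriv_eq_zero_of_mem_nhds_of_forall_eq (Ici_mem_nhds hbt) hb
  obtain ⟨M, hM⟩ := hsupp.exists_bound_of_continuous (hf.continuous_deriv le_rfl)
  exact ⟨M, forall_mem_range.2 hM⟩

lemma deriv_comp_add_const_div (f : ℝ → F) (a l t : ℝ) :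
    deriv (fun x => f ((x + a) / l)) t = l⁻¹ • deriv f ((t + a) / l) := by
  simp only [div_eq_inv_mul]
  rw [deriv_comp_add_const (fun x => f (l⁻¹ * x)), deriv_comp_mul_left]

end Deriv

section Cutoff

variable {α : ℝ → ℝ} {l d : ℝ}

/-- The cutoff `β₋(t) = α((t - d)/l)`, which localizes to the left of `d + l`. -/
noncomputable def leftCutoff (α : ℝ → ℝ) (l d t : ℝ) : ℝ := α ((t - d) / l)

/-- The cutoff `β₊(t) = 1 - α((t + d)/l)`, which localizes to the right of `-d - l`. -/
noncomputable def rightCutoff (α : ℝ → ℝ) (l d t : ℝ) : ℝ := 1 - α ((t + d) / l)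

/-- The normalizing factor `D = β₋² + β₊²` of the pair of cutoffs. -/
noncomputable def cutoffSqSum (α : ℝ → ℝ) (l d t : ℝ) : ℝ :=
  leftCutoff α l d t ^ 2 + rightCutoff α l d t ^ 2

/-- The coefficient `β₋ β' / D` with which a cutoff `β` enters the error term `E₊`; it is used for
`β = β₋` and `β = β₊`. -/
noncomputable def errorCoeff (α : ℝ → ℝ) (l d : ℝ) (β : ℝ → ℝ) (t : ℝ) : ℝ :=
  leftCutoff α l d t * deriv β t / cutoffSqSum α l d t

lemma deriv_leftCutoff (α : ℝ → ℝ) (l d t : ℝ) :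
    deriv (leftCutoff α l d) t = l⁻¹ * deriv α ((t - d) / l) := by
  rw [sub_eq_add_neg]
  exact deriv_comp_add_const_div α (-d) l t

lemma deriv_rightCutoff (α : ℝ → ℝ) (l d t : ℝ) :
    deriv (rightCutoff α l d) t = -(l⁻¹ * deriv α ((t + d) / l)) :=
  (deriv_const_sub 1).trans (congrArg Neg.neg (deriv_comp_add_const_div α d l t))

lemma abs_inv_mul_deriv_le (hl : 0 < l) (hα' : BddAbove (range fun s => |deriv α s|)) (t : ℝ) :
    |l⁻¹ * deriv α t| ≤ (⨆ s, |deriv α s|) / l := by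
  rw [abs_mul, abs_of_pos (inv_pos.2 hl), ← div_eq_inv_mul]
  gcongr
  exact le_ciSup hα' t

lemma leftCutoff_eq_one_or_rightCutoff_eq_one (hα1 : ∀ t ≤ -1, α t = 1)
    (hα0 : ∀ t, 1 ≤ t → α t = 0) (hl : 0 < l) (hld : l ≤ d) (t : ℝ) :
    leftCutoff α l d t = 1 ∨ rightCutoff α l d t = 1 := by
  rcases le_total t 0 with ht | ht
  · exact .inl (hα1 _ ((div_le_iff₀ hl).2 (by linarith)))
  · exact .inr (sub_eq_self.2 (hα0 _ ((le_div_iff₀ hl).2 (by linarith))))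

lemma abs_leftCutoff_le_cutoffSqSum (hα1 : ∀ t ≤ -1, α t = 1)
    (hα0 : ∀ t, 1 ≤ t → α t = 0) (hl : 0 < l) (hld : l ≤ d) (t : ℝ) :
    |leftCutoff α l d t| ≤ cutoffSqSum α l d t := by
  rw [cutoffSqSum]
  rcases leftCutoff_eq_one_or_rightCutoff_eq_one hα1 hα0 hl hld t with h | h
  · rw [h, abs_one]
    linarith [sq_nonneg (rightCutoff α l d t)]
  · rw [h, ← sq_abs]
    nlinarith [sq_nonneg (|leftCutoff α l d t| - 1)]

lemma abs_errorCoeff_le_abs_deriv (hα1 : ∀ t ≤ -1, α t = 1)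
    (hα0 : ∀ t, 1 ≤ t → α t = 0) (hl : 0 < l) (hld : l ≤ d) (β : ℝ → ℝ) (t : ℝ) :
    |errorCoeff α l d β t| ≤ |deriv β t| := by
  have hD : |leftCutoff α l d t| ≤ |cutoffSqSum α l d t| :=
    (abs_leftCutoff_le_cutoffSqSum hα1 hα0 hl hld t).trans (le_abs_self _)
  rw [errorCoeff, mul_div_right_comm, abs_mul, abs_div]
  exact mul_le_of_le_one_left (abs_nonneg _) (div_le_one_of_le₀ hD (abs_nonneg _))

lemma abs_errorCoeff_leftCutoff_le (hα1 : ∀ t ≤ -1, α t = 1) (hα0 : ∀ t, 1 ≤ t → α t = 0)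
    (hα' : BddAbove (range fun s => |deriv α s|)) (hl : 0 < l) (hld : l ≤ d) (t : ℝ) :
    |errorCoeff α l d (leftCutoff α l d) t| ≤ (⨆ s, |deriv α s|) / l := by
  refine (abs_errorCoeff_le_abs_deriv hα1 hα0 hl hld _ t).trans ?_
  rw [deriv_leftCutoff]
  exact abs_inv_mul_deriv_le hl hα' _

lemma abs_errorCoeff_rightCutoff_le (hα1 : ∀ t ≤ -1, α t = 1) (hα0 : ∀ t, 1 ≤ t → α t = 0)
    (hα' : BddAbove (range fun s => |deriv α s|)) (hl : 0 < l) (hld : l ≤ d) (t : ℝ) :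
    |errorCoeff α l d (rightCutoff α l d) t| ≤ (⨆ s, |deriv α s|) / l := by
  refine (abs_errorCoeff_le_abs_deriv hα1 hα0 hl hld _ t).trans ?_
  rw [deriv_rightCutoff, abs_neg]
  exact abs_inv_mul_deriv_le hl hα' _

lemma errorCoeff_rightCutoff_eq_zero (hα0 : ∀ t, 1 ≤ t → α t = 0) (hl : 0 < l) {t : ℝ}
    (ht : l - d < t) : errorCoeff α l d (rightCutoff α l d) t = 0 := by
  have htd : 1 < (t + d) / l := (one_lt_div hl).2 (by linarith)
  have hα' : deriv α ((t + d) / l) = 0 :=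
    deriv_eq_zero_of_mem_nhds_of_forall_eq (Ici_mem_nhds htd) hα0
  simp only [errorCoeff, deriv_rightCutoff, hα', mul_zero, neg_zero, zero_div]

lemma measurable_errorCoeff (hα : Measurable α) (l d : ℝ) (β : ℝ → ℝ) :
    Measurable (errorCoeff α l d β) := by
  unfold errorCoeff cutoffSqSum leftCutoff rightCutoff
  fun_prop

end Cutoff

section FilledSection

variable {E : Type*} [NormedAddCommGroup E] [NormedSpace ℝ E]

/-- The component `E₊(u₋, u₊) = τ_{-R}(β₋β₊'/D) · τ_{-2R} u₋ + τ_{-R}(β₋β₋'/D) · u₊` of the error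
term of the linear filled section. -/
noncomputable def errorPlus (α : ℝ → ℝ) (l d R : ℝ) (um up : ℝ → E) (t : ℝ) : E :=
  errorCoeff α l d (rightCutoff α l d) (t - R) • um (t - 2 * R) +
    errorCoeff α l d (leftCutoff α l d) (t - R) • up t

theorem stmt14_general {δ : ℝ} (hδ : 0 ≤ δ) {p : ℝ≥0∞} (hp : 1 ≤ p)
    {α : ℝ → ℝ} (hα : ContDiff ℝ 1 α) (hα1 : ∀ t ≤ -1, α t = 1) (hα0 : ∀ t, 1 ≤ t → α t = 0)
    {l d R : ℝ} (hl : 0 < l) (hld : l ≤ d) (hR : 0 < R) {um up : ℝ → E}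
    (hum : AEStronglyMeasurable um) (hup : AEStronglyMeasurable up) :
    expWeightedNorm δ p (Ioi 0) (errorPlus α l d R um up) ≤
      ENNReal.ofReal ((⨆ s, |deriv α s|) / l) *
        (ENNReal.ofReal (Real.exp (2 * δ * (l - d))) * expWeightedNorm (-δ) p (Iio 0) um
          + expWeightedNorm δ p (Ioi 0) up) := by
  have hα' : BddAbove (range fun s => |deriv α s|) :=
    bddAbove_range_norm_deriv_of_eventuallyEq_const hα
      (Filter.eventually_atBot.2 ⟨-1, hα1⟩) (Filter.eventually_atTop.2 ⟨1, hα0⟩)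
  have hcoeff (β : ℝ → ℝ) : AEStronglyMeasurable (fun t => errorCoeff α l d β (t - R)) :=
    ((measurable_errorCoeff hα.continuous.measurable l d β).comp
      (measurable_sub_const R)).aestronglyMeasurable
  have hum_shift : AEStronglyMeasurable fun t => um (t - 2 * R) :=
    hum.comp_measurePreserving (measurePreserving_sub_right volume (2 * R))
  have hexponent : δ * (2 * (R + l - d) - 2 * R) = 2 * δ * (l - d) := by ring
  have hminus := expWeightedNorm_smul_comp_sub_right_le hδ p (Ioi 0) (T := R + l - d) (h := 2 * R)
    (fun t => abs_errorCoeff_rightCutoff_le hα1 hα0 hα' hl hld (t - R))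
    (fun t ht => errorCoeff_rightCutoff_eq_zero hα0 hl (by linarith)) (by linarith) hum.restrict
  have hplus := expWeightedNorm_smul_le δ p (measurableSet_Ioi (a := 0))
    (fun t _ => abs_errorCoeff_leftCutoff_le hα1 hα0 hα' hl hld (t - R)) up
  rw [hexponent] at hminus
  rw [mul_add]
  exact (expWeightedNorm_add_le hp δ ((hcoeff _).smul hum_shift).restrict
    ((hcoeff _).smul hup).restrict).trans (add_le_add hminus hplus)

end FilledSection

/-- key estimate in Lemma 3.3. Here `βm`, `βp` play the roles of
`β₋(t) = α((t−d)/l)`, `β₊(t) = 1 − α((t+d)/l)`, `D = β₋² + β₊²`, and `um`, `up` of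
`u₋`, `u₊`. The error component `E₊` of the linear filled-section satisfies
`‖E₊(u₋,u₊)‖_{0,p,δ,+} ≤ (sup|α'|/l)(e^{2δ(l−d)}‖u₋‖_{0,p,δ,−} + ‖u₊‖_{0,p,δ,+})`. -/
theorem stmt14 (n : ℕ) (δ p : ℝ) (hδ : δ ∈ Ioo (0:ℝ) 1) (hp : 1 < p)
    (α : ℝ → ℝ) (hα : ContDiff ℝ (⊤ : ℕ∞) α) (hα01 : ∀ t, α t ∈ Icc (0:ℝ) 1)
    (hα1 : ∀ t : ℝ, t ≤ -1 → α t = 1) (hα0 : ∀ t : ℝ, 1 ≤ t → α t = 0)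
    (l d : ℝ) (hl : 1 ≤ l) (hd : d = 3 * l) (R : ℝ) (hR : d + l ≤ R)
    (um up : ℝ → (Fin n → ℂ)) (hum : Measurable um) (hup : Measurable up)
    (humfin : wnormMinus n p δ um < ⊤) (hupfin : wnormPlus n p δ up < ⊤) :
    let βm : ℝ → ℝ := fun t => α ((t - d) / l)
    let βp : ℝ → ℝ := fun t => 1 - α ((t + d) / l)
    let D : ℝ → ℝ := fun t => βm t ^ 2 + βp t ^ 2
    wnormPlus n p δ
        (fun t => ((βm (t - R) * deriv βp (t - R)) / D (t - R)) • um (t - 2 * R)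
          + ((βm (t - R) * deriv βm (t - R)) / D (t - R)) • up t) ≤
      ENNReal.ofReal ((⨆ s : ℝ, |deriv α s|) / l) *
        (ENNReal.ofReal (Real.exp (2 * δ * (l - d))) * wnormMinus n p δ um
          + wnormPlus n p δ up) := by
  simp only [wnormPlus_eq_expWeightedNorm n (zero_lt_one.trans hp),
    wnormMinus_eq_expWeightedNorm n (zero_lt_one.trans hp)]
  exact stmt14_general hδ.1.le (ENNReal.one_le_ofReal.2 hp.le) (hα.of_le (by simp)) hα1 hα0
    (by linarith) (by linarith) (by linarith) hum.aestronglyMeasurable hup.aestronglyMeasurable
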